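/- Let X ⊆ ℝ^m and Y ⊆ ℝ^n be nonempty compact sets, let h : ℝ^m → ℝ be given by h(x) = ⟨a,x⟩ + b with h(x) ≥ 0 for all x ∈ X, and let Z = X ⊴^h Y. Fix T ≥ 1, points x^1,…,x^T ∈ X and y^1,…,y^T ∈ Y, and loss vectors ℓ_x^1,…,ℓ_x^T ∈ ℝ^m and ℓ_y^1,…,ℓ_y^T ∈ ℝ^n. Then the cumulative regret over Z of the decisions z^t = (x^t, h(x^t)•y^t), namely Σ_{t=1}^T (⟨ℓ_x^t, x^t⟩ + h(x^t)⟨ℓ_y^t, y^t⟩) − min_{ẑ ∈ Z} Σ_{t=1}^T ⟨(ℓ_x^t, ℓ_y^t), ẑ⟩, equals Σ_{t=1}^T (⟨ℓ_x^t, x^t⟩ + h(x^t)⟨ℓ_y^t, y^t⟩) − min_{x̂ ∈ X} { Σ_{t=1}^T ⟨ℓ_x^t, x̂⟩ + h(x̂) · min_{ŷ ∈ Y} Σ_{t=1}^T ⟨ℓ_y^t, ŷ⟩ }. -/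

import Mathlib

/-- Euclidean inner product on `ℝ^k`. -/
def dot {k : ℕ} (u v : Fin k → ℝ) : ℝ := ∑ i, u i * v i

/-- The scaled extension of `X ⊆ ℝ^m` with `Y ⊆ ℝ^n` via `h : ℝ^m → ℝ`,
namely `X ⊴^h Y = {(x, h(x) • y) : x ∈ X, y ∈ Y}`. -/
def scaledExt {m n : ℕ} (X : Set (Fin m → ℝ)) (Y : Set (Fin n → ℝ))
    (h : (Fin m → ℝ) → ℝ) : Set ((Fin m → ℝ) × (Fin n → ℝ)) :=
  {p | ∃ x ∈ X, ∃ y ∈ Y, p = (x, h x • y)}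

/-!
Fix `x`. Since `h x ≥ 0`, scaling by `h x` commutes with the infimum over `Y`, so the best
response in the fiber `{x} × (h x • Y)` costs the `x`-loss plus `h x` times the infimum of the
`y`-loss over `Y`. The scaled extension is the union of these fibers, and the infimum over a union
is the infimum of the infima.
-/

open Set

theorem dot_smul {k : ℕ} (u : Fin k → ℝ) (r : ℝ) (v : Fin k → ℝ) :
    dot u (r • v) = r * dot u v :=
  dotProduct_smul r u v

theorem continuous_dot {k : ℕ} (u : Fin k → ℝ) : Continuous (dot u) :=
  continuous_const.dotProduct continuous_id

theorem isGLB_image_add_smul {E : Type*} [SMul ℝ E] {s : Set E} {g : E → ℝ} {c r : ℝ} (a : ℝ)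
    (g_smul : ∀ y, g (r • y) = r * g y) (hr : 0 ≤ r) (hc : IsGLB (g '' s) c) :
    IsGLB ((fun y ↦ a + g (r • y)) '' s) (a + r * c) := by
  have scaled : IsGLB ((fun y ↦ g (r • y)) '' s) (r * c) := by
    simpa only [image_image, g_smul] using hc.mul_left hr
  simpa only [image_image, OrderIso.addLeft_apply] using (OrderIso.addLeft a).isGLB_image'.2 scaled

section ScaledExt

variable {m n : ℕ} {X : Set (Fin m → ℝ)} {Y : Set (Fin n → ℝ)} {h : (Fin m → ℝ) → ℝ}

theorem image_scaledExt {α : Type*} (F : (Fin m → ℝ) × (Fin n → ℝ) → α) :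
    F '' scaledExt X Y h = ⋃ x : X, (fun y ↦ F (x, h x • y)) '' Y := by
  ext
  simp only [scaledExt, mem_image, mem_ofPred_eq, mem_iUnion, Subtype.exists]
  grind

theorem isGLB_image_scaledExt_iff {f : (Fin m → ℝ) → ℝ} {g : (Fin n → ℝ) → ℝ} {c d : ℝ}
    (h_nonneg : ∀ x ∈ X, 0 ≤ h x) (g_smul : ∀ r y, 0 ≤ r → g (r • y) = r * g y)
    (hc : IsGLB (g '' Y) c) :
    IsGLB ((fun z ↦ f z.1 + g z.2) '' scaledExt X Y h) d ↔
      IsGLB ((fun x ↦ f x + h x * c) '' X) d := by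
  have isGLB_fiber (x : X) : IsGLB ((fun y ↦ f x + g (h x • y)) '' Y) (f x + h x * c) :=
    isGLB_image_add_smul (f x) (fun y ↦ g_smul (h x) y (h_nonneg x x.2)) (h_nonneg x x.2) hc
  rw [image_scaledExt, ← isGLB_iUnion_iff_of_isGLB isGLB_fiber, image_eq_range]

theorem sInf_image_scaledExt {f : (Fin m → ℝ) → ℝ} {g : (Fin n → ℝ) → ℝ}
    (hX : X.Nonempty) (hY : Y.Nonempty) (h_nonneg : ∀ x ∈ X, 0 ≤ h x)
    (g_smul : ∀ r y, 0 ≤ r → g (r • y) = r * g y) (hg : BddBelow (g '' Y))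
    (hf : BddBelow ((fun x ↦ f x + h x * sInf (g '' Y)) '' X)) :
    sInf ((fun z ↦ f z.1 + g z.2) '' scaledExt X Y h) =
      sInf ((fun x ↦ f x + h x * sInf (g '' Y)) '' X) := by
  have isGLB_joint := (isGLB_image_scaledExt_iff h_nonneg g_smul (isGLB_csInf (hY.image g) hg)).2
    (isGLB_csInf (hX.image _) hf)
  exact isGLB_joint.csInf_eq isGLB_joint.nonempty

theorem regret_over_scaledExt_eq_general {ι : Type*} [Fintype ι]
    (hX : X.Nonempty) (hY : Y.Nonempty) (h_nonneg : ∀ x ∈ X, 0 ≤ h x) (x : ι → X) (y : ι → Y)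
    (f : ι → (Fin m → ℝ) → ℝ) (g : ι → (Fin n → ℝ) → ℝ)
    (g_smul : ∀ t r v, 0 ≤ r → g t (r • v) = r * g t v)
    (hg : BddBelow ((fun yhat ↦ ∑ t, g t yhat) '' Y))
    (hf : BddBelow ((fun xhat ↦
      (∑ t, f t xhat) + h xhat * sInf ((fun yhat ↦ ∑ t, g t yhat) '' Y)) '' X)) :
    (∑ t, (f t (x t) + h (x t) * g t (y t))) -
        sInf ((fun zhat ↦ ∑ t, (f t zhat.1 + g t zhat.2)) '' scaledExt X Y h) =
      (∑ t, (f t (x t) + h (x t) * g t (y t))) -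
        sInf ((fun xhat ↦
          (∑ t, f t xhat) + h xhat * sInf ((fun yhat ↦ ∑ t, g t yhat) '' Y)) '' X) := by
  have sum_smul (r : ℝ) (v : Fin n → ℝ) (hr : 0 ≤ r) :
      ∑ t, g t (r • v) = r * ∑ t, g t v := by
    simp only [g_smul _ r v hr, Finset.mul_sum]
  simp only [Finset.sum_add_distrib, sInf_image_scaledExt hX hY h_nonneg sum_smul hg hf]

end ScaledExt

theorem regret_over_scaledExt_eq {m n : ℕ}
    (X : Set (Fin m → ℝ)) (Y : Set (Fin n → ℝ))
    (a : Fin m → ℝ) (b : ℝ) (h : (Fin m → ℝ) → ℝ)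
    (hdef : ∀ x, h x = dot a x + b)
    (hXne : X.Nonempty) (hXc : IsCompact X)
    (hYne : Y.Nonempty) (hYc : IsCompact Y)
    (hnn : ∀ x ∈ X, 0 ≤ h x)
    (T : ℕ) (hT : 1 ≤ T)
    (x : ℕ → Fin m → ℝ) (y : ℕ → Fin n → ℝ)
    (hx : ∀ t < T, x t ∈ X) (hy : ∀ t < T, y t ∈ Y)
    (lx : ℕ → Fin m → ℝ) (ly : ℕ → Fin n → ℝ) :
    (∑ t ∈ Finset.range T, (dot (lx t) (x t) + h (x t) * dot (ly t) (y t)))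
      - sInf ((fun zhat : (Fin m → ℝ) × (Fin n → ℝ) =>
          ∑ t ∈ Finset.range T, (dot (lx t) zhat.1 + dot (ly t) zhat.2)) ''
            scaledExt X Y h)
    = (∑ t ∈ Finset.range T, (dot (lx t) (x t) + h (x t) * dot (ly t) (y t)))
      - sInf ((fun xhat =>
          (∑ t ∈ Finset.range T, dot (lx t) xhat)
            + h xhat * sInf ((fun yhat => ∑ t ∈ Finset.range T, dot (ly t) yhat) '' Y))
          '' X) := by
  have h_cont : Continuous h := by
    simpa only [funext hdef] using (continuous_dot a).add_const b
  have sum_cont {k : ℕ} (l : ℕ → Fin k → ℝ) : Continuous fun v ↦ ∑ t : Fin T, dot (l t) v :=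
    continuous_finsetSum _ fun t _ ↦ continuous_dot (l t)
  simpa only [Finset.sum_range] using
    regret_over_scaledExt_eq_general hXne hYne hnn
      (fun t : Fin T ↦ ⟨x t, hx t t.2⟩) (fun t : Fin T ↦ ⟨y t, hy t t.2⟩)
      (fun t ↦ dot (lx t)) (fun t ↦ dot (ly t)) (fun t r v _ ↦ dot_smul (ly t) r v)
      (hYc.bddBelow_image (sum_cont ly).continuousOn)
      (hXc.bddBelow_image ((sum_cont lx).add (h_cont.mul_const _)).continuousOn)
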